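/- Every tile of G = Z_p^2 × Z_q is a spectral set, where p and q are distinct primes. -/

import Mathlib

open Complex Finset

noncomputable def chiZp2 (p : ℕ) (a u : ZMod p × ZMod p) : ℂ :=
  Complex.exp (2 * Real.pi * Complex.I * (((u.1 * a.1 + u.2 * a.2 : ZMod p).val : ℂ) / p))

noncomputable def chiG (p q : ℕ) (l x : (ZMod p × ZMod p) × ZMod q) : ℂ :=
  chiZp2 p l.1 x.1 *
    Complex.exp (2 * Real.pi * Complex.I * (((x.2 * l.2 : ZMod q).val : ℂ) / q))

def IsSpectrum (p q : ℕ) [NeZero p] [NeZero q]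
    (S Λ : Finset ((ZMod p × ZMod p) × ZMod q)) : Prop :=
  Λ.card = S.card ∧ ∀ l ∈ Λ, ∀ l' ∈ Λ, l ≠ l' →
    ∑ x ∈ S, chiG p q l x * (starRingEnd ℂ) (chiG p q l' x) = 0

def IsSpectral (p q : ℕ) [NeZero p] [NeZero q]
    (S : Finset ((ZMod p × ZMod p) × ZMod q)) : Prop :=
  ∃ Λ, IsSpectrum p q S Λ

def Tiles (p q : ℕ) [NeZero p] [NeZero q]
    (S : Finset ((ZMod p × ZMod p) × ZMod q)) : Prop :=
  ∃ T : Finset ((ZMod p × ZMod p) × ZMod q),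
    S.card * T.card = Fintype.card ((ZMod p × ZMod p) × ZMod q) ∧
    ∀ g, ∃ s ∈ S, ∃ t ∈ T, s + t = g

theorem ts_gal {ι : Type*} (p q : ℕ) [Fact p.Prime] [Fact q.Prime] (hpq : p ≠ q)
    (S : Finset ι) (f : ι → ZMod p) (g : ι → ZMod q)
    (h : ∑ x ∈ S, ZMod.stdAddChar (f x) * ZMod.stdAddChar (g x) = (0 : ℂ))
    (k : ZMod p) (l : ZMod q) (hk : k ≠ 0) (hl : l ≠ 0) :
    ∑ x ∈ S, ZMod.stdAddChar (k * f x) * ZMod.stdAddChar (l * g x) = (0 : ℂ) := by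
  have hp : p.Prime := Fact.out
  have hq : q.Prime := Fact.out
  have hcop : Nat.Coprime p q := (Nat.coprime_primes hp hq).2 hpq
  obtain ⟨m, hm1, hm2⟩ := Nat.chineseRemainder hcop k.val l.val
  have hmk : (m : ZMod p) = k := by
    rw [(ZMod.natCast_eq_natCast_iff _ _ _).2 hm1, ZMod.natCast_zmod_val]
  have hml : (m : ZMod q) = l := by
    rw [(ZMod.natCast_eq_natCast_iff _ _ _).2 hm2, ZMod.natCast_zmod_val]
  have hmc : Nat.Coprime m (p * q) := by
    apply Nat.Coprime.mul_right
    · rw [← ZMod.isUnit_iff_coprime, hmk]; exact hk.isUnit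
    · rw [← ZMod.isUnit_iff_coprime, hml]; exact hl.isUnit
  have hpq0 : p * q ≠ 0 := mul_ne_zero hp.ne_zero hq.ne_zero
  have hmu := Complex.isPrimitiveRoot_exp (p * q) hpq0
  set mu := Complex.exp (2 * Real.pi * I / ((p * q : ℕ) : ℂ)) with hmudef
  have hp0 : (p : ℂ) ≠ 0 := by exact_mod_cast hp.ne_zero
  have hq0 : (q : ℂ) ≠ 0 := by exact_mod_cast hq.ne_zero
  have e1 (j : ZMod p) : (ZMod.stdAddChar j : ℂ) = mu ^ (q * j.val) := by
    rw [ZMod.stdAddChar_apply, ZMod.toCircle_apply, hmudef, ← Complex.exp_nat_mul]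
    congr 1
    push_cast
    field_simp
  have e2 (j : ZMod q) : (ZMod.stdAddChar j : ℂ) = mu ^ (p * j.val) := by
    rw [ZMod.stdAddChar_apply, ZMod.toCircle_apply, hmudef, ← Complex.exp_nat_mul]
    congr 1
    push_cast
    field_simp
  let P : Polynomial ℤ := ∑ x ∈ S, Polynomial.X ^ (q * (f x).val + p * (g x).val)
  have hP : Polynomial.aeval mu P = 0 := by
    rw [← h]
    simp only [P, map_sum, map_pow, map_mul, Polynomial.aeval_X, e1, e2, pow_add]
  have hd : minpoly ℤ mu ∣ P :=
    minpoly.isIntegrallyClosed_dvd (hmu.isIntegral (Nat.pos_of_ne_zero hpq0)) hP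
  rw [hmu.minpoly_eq_pow_coprime hmc] at hd
  have hP2 : Polynomial.aeval (mu ^ m) P = 0 := by
    obtain ⟨Q, hQ⟩ := hd
    rw [hQ, map_mul, minpoly.aeval, zero_mul]
  rw [← hP2]
  simp only [P, map_sum, map_pow, Polynomial.aeval_X]
  refine Finset.sum_congr rfl fun x _ => ?_
  rw [← hmk, ← hml, ← nsmul_eq_mul, ← nsmul_eq_mul, AddChar.map_nsmul_eq_pow,
    AddChar.map_nsmul_eq_pow, e1, e2, ← mul_pow, ← pow_add, ← pow_mul, ← pow_mul, mul_comm]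

theorem ts_orth (p : ℕ) [Fact p.Prime] (b : ZMod p) :
    ∑ k : ZMod p, (ZMod.stdAddChar (k * b) : ℂ) = if b = 0 then (p : ℂ) else 0 := by
  rw [AddChar.sum_mulShift b (ZMod.isPrimitive_stdAddChar p), ZMod.card]
  push_cast
  rfl

theorem ts_count {ι : Type*} (p q : ℕ) [Fact p.Prime] [Fact q.Prime] (hpq : p ≠ q)
    (S : Finset ι) (f : ι → ZMod p) (g : ι → ZMod q)
    (h : ∑ x ∈ S, ZMod.stdAddChar (f x) * ZMod.stdAddChar (g x) = (0 : ℂ))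
    (u : ZMod p) (v : ZMod q) :
    p * q * (S.filter fun x => f x = u ∧ g x = v).card + S.card =
      p * (S.filter fun x => f x = u).card + q * (S.filter fun x => g x = v).card := by
  classical
  have h0 : ∑ x ∈ S, ZMod.stdAddChar (f x - u) * ZMod.stdAddChar (g x - v) = (0 : ℂ) := by
    have : ∀ x, (ZMod.stdAddChar (f x - u) : ℂ) * ZMod.stdAddChar (g x - v) =
        (ZMod.stdAddChar (f x) * ZMod.stdAddChar (g x)) *
          (ZMod.stdAddChar (-u) * ZMod.stdAddChar (-v)) := by
      intro x
      rw [sub_eq_add_neg, sub_eq_add_neg, AddChar.map_add_eq_mul, AddChar.map_add_eq_mul]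
      ring
    simp only [this]
    rw [← Finset.sum_mul, h, zero_mul]
  have hg := ts_gal p q hpq S (fun x => f x - u) (fun x => g x - v) h0
  set D : ZMod p → ZMod q → ℂ := fun k l =>
    ∑ x ∈ S, ZMod.stdAddChar (k * (f x - u)) * ZMod.stdAddChar (l * (g x - v)) with hD
  have d0 : D 0 0 = S.card := by simp [hD]
  have d1 : ∑ k, D k 0 = p * (S.filter fun x => f x = u).card := by
    simp only [hD, zero_mul, AddChar.map_zero_eq_one, mul_one]
    rw [Finset.sum_comm]
    simp only [ts_orth, sub_eq_zero]
    rw [← Finset.sum_filter, Finset.sum_const, nsmul_eq_mul, mul_comm]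
  have d2 : ∑ l, D 0 l = q * (S.filter fun x => g x = v).card := by
    simp only [hD, zero_mul, AddChar.map_zero_eq_one, one_mul]
    rw [Finset.sum_comm]
    simp only [ts_orth, sub_eq_zero]
    rw [← Finset.sum_filter, Finset.sum_const, nsmul_eq_mul, mul_comm]
  have d3 : ∑ k, ∑ l, D k l = p * q * (S.filter fun x => f x = u ∧ g x = v).card := by
    have : ∑ k, ∑ l, D k l = ∑ x ∈ S, (∑ k : ZMod p, (ZMod.stdAddChar (k * (f x - u)) : ℂ)) *
        ∑ l : ZMod q, (ZMod.stdAddChar (l * (g x - v)) : ℂ) := by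
      simp only [hD, Finset.sum_mul_sum]
      rw [Finset.sum_comm]
      rw [Finset.sum_congr rfl fun l _ => Finset.sum_comm]
      rw [Finset.sum_comm]
      exact Finset.sum_congr rfl fun x _ => Finset.sum_comm
    rw [this]
    simp only [ts_orth, sub_eq_zero]
    have h2 : ∀ x, ((if f x = u then (p : ℂ) else 0) * if g x = v then (q : ℂ) else 0) =
        if f x = u ∧ g x = v then (p : ℂ) * q else 0 := by
      intro x; split_ifs <;> simp_all
    simp only [h2]
    rw [← Finset.sum_filter, Finset.sum_const, nsmul_eq_mul, mul_comm]
  have d4 : ∑ k, ∑ l, D k l + D 0 0 = ∑ k, D k 0 + ∑ l, D 0 l := by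
    have : ∀ k l, D k l = ((if l = 0 then D k 0 else 0) + (if k = 0 then D 0 l else 0)) -
        (if k = 0 then (if l = 0 then D 0 0 else 0) else 0) := by
      intro k l
      by_cases hk : k = 0 <;> by_cases hl : l = 0
      · simp [hk, hl]
      · simp [hk, hl]
      · simp [hk, hl]
      · simpa [hk, hl] using hg k l hk hl
    rw [Finset.sum_congr rfl fun k _ => Finset.sum_congr rfl fun l _ => this k l]
    simp only [Finset.sum_sub_distrib, Finset.sum_add_distrib]
    have a1 : ∑ k : ZMod p, ∑ l : ZMod q, (if k = 0 then D 0 l else 0) = ∑ l, D 0 l := by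
      rw [Finset.sum_comm]; simp
    have a2 : ∑ k : ZMod p, ∑ l : ZMod q, (if k = 0 then (if l = 0 then D 0 0 else 0) else 0)
        = D 0 0 := by
      rw [Finset.sum_comm]; simp
    rw [a1, a2]
    simp
  rw [d0, d1, d2, d3] at d4
  exact_mod_cast d4

theorem ts_special {ι : Type*} (p q : ℕ) [Fact p.Prime] [Fact q.Prime] (hpq : p ≠ q)
    (S : Finset ι) (hS : S.card = p) (f : ι → ZMod p) (g : ι → ZMod q)
    (h : ∑ x ∈ S, ZMod.stdAddChar (f x) * ZMod.stdAddChar (g x) = (0 : ℂ)) :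
    ∑ x ∈ S, (ZMod.stdAddChar (f x) : ℂ) = 0 := by
  classical
  have hp : p.Prime := Fact.out
  have hq : q.Prime := Fact.out
  have hc := ts_count p q hpq S f g h
  rw [hS] at hc
  have hcop : Nat.Coprime p q := (Nat.coprime_primes hp hq).2 hpq
  have hdv : ∀ v, p ∣ (S.filter fun x => g x = v).card := by
    intro v
    have h1 := hc 0 v
    apply hcop.dvd_of_dvd_mul_left
    rw [← Nat.dvd_add_right (Dvd.intro _ rfl : p ∣ p * (S.filter fun x => f x = 0).card), ← h1]
    exact Dvd.intro ((q * (S.filter fun x => f x = 0 ∧ g x = v).card) + 1) (by ring)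
  obtain ⟨x0, hx0⟩ : S.Nonempty := by
    rw [← Finset.card_pos, hS]; exact hp.pos
  have hfull : S.filter (fun x => g x = g x0) = S := by
    apply Finset.eq_of_subset_of_card_le (Finset.filter_subset _ _)
    rw [hS]
    exact Nat.le_of_dvd (Finset.card_pos.2 ⟨x0, by simp [hx0]⟩) (hdv _)
  have hgc : ∀ x ∈ S, g x = g x0 := by
    intro x hx
    rw [← hfull] at hx
    exact (Finset.mem_filter.1 hx).2
  have hR : ∑ x ∈ S, (ZMod.stdAddChar (f x) : ℂ) * ZMod.stdAddChar (g x0) = 0 := by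
    rw [← h]
    exact Finset.sum_congr rfl fun x hx => by rw [hgc x hx]
  rw [← Finset.sum_mul] at hR
  refine (mul_eq_zero.1 hR).resolve_right ?_
  rw [ZMod.stdAddChar_apply]
  exact Circle.coe_ne_zero _

theorem ts_chi (p q : ℕ) [Fact p.Prime] [Fact q.Prime] (l x : (ZMod p × ZMod p) × ZMod q) :
    chiG p q l x = ZMod.stdAddChar (x.1.1 * l.1.1 + x.1.2 * l.1.2) *
      ZMod.stdAddChar (x.2 * l.2) := by
  unfold chiG chiZp2
  rw [ZMod.stdAddChar_apply, ZMod.stdAddChar_apply, ZMod.toCircle_apply, ZMod.toCircle_apply,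
    mul_div_assoc, mul_div_assoc]

/-- The Fourier transform of the indicator of `S`. -/
noncomputable def tsF (p q : ℕ) (S : Finset ((ZMod p × ZMod p) × ZMod q))
    (l : (ZMod p × ZMod p) × ZMod q) : ℂ := ∑ x ∈ S, chiG p q l x

theorem ts_chi_sub (p q : ℕ) [Fact p.Prime] [Fact q.Prime]
    (l l' x : (ZMod p × ZMod p) × ZMod q) :
    chiG p q l x * (starRingEnd ℂ) (chiG p q l' x) = chiG p q (l - l') x := by
  simp only [ts_chi, map_mul]
  rw [← AddChar.map_neg_eq_conj, ← AddChar.map_neg_eq_conj]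
  rw [mul_mul_mul_comm, ← AddChar.map_add_eq_mul, ← AddChar.map_add_eq_mul]
  congr 2 <;> simp only [Prod.fst_sub, Prod.snd_sub] <;> ring

theorem ts_spectral (p q : ℕ) [Fact p.Prime] [Fact q.Prime]
    (A L : Finset ((ZMod p × ZMod p) × ZMod q)) (hc : L.card = A.card)
    (hs : ∀ l ∈ L, ∀ l' ∈ L, l - l' ∈ L) (hz : ∀ l ∈ L, l ≠ 0 → tsF p q A l = 0) :
    IsSpectral p q A := by
  refine ⟨L, hc, fun l hl l' hl' hne => ?_⟩
  simp only [ts_chi_sub]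
  exact hz _ (hs l hl l' hl') (sub_ne_zero.2 hne)

theorem ts_chi_add (p q : ℕ) [Fact p.Prime] [Fact q.Prime]
    (l x y : (ZMod p × ZMod p) × ZMod q) :
    chiG p q l (x + y) = chiG p q l x * chiG p q l y := by
  simp only [ts_chi]
  rw [mul_mul_mul_comm, ← AddChar.map_add_eq_mul, ← AddChar.map_add_eq_mul]
  congr 2 <;> simp only [Prod.fst_add, Prod.snd_add] <;> ring

theorem ts_sum_univ (p q : ℕ) [Fact p.Prime] [Fact q.Prime]
    (l : (ZMod p × ZMod p) × ZMod q) (hl : l ≠ 0) :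
    ∑ g, chiG p q l g = 0 := by
  obtain ⟨⟨a, b⟩, c⟩ := l
  have : ∑ g, chiG p q ((a, b), c) g =
      ((∑ x : ZMod p, (ZMod.stdAddChar (x * a) : ℂ)) * ∑ x : ZMod p, (ZMod.stdAddChar (x * b) : ℂ))
        * ∑ x : ZMod q, (ZMod.stdAddChar (x * c) : ℂ) := by
    simp only [ts_chi, AddChar.map_add_eq_mul, Fintype.sum_prod_type, Finset.sum_mul_sum]
    simp only [Finset.sum_mul]
    exact Finset.sum_congr rfl fun x _ => Finset.sum_comm
  rw [this, ts_orth, ts_orth, ts_orth]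
  by_cases ha : a = 0
  · by_cases hb : b = 0
    · by_cases hc : c = 0
      · subst ha hb hc; exact absurd rfl hl
      · simp [hc]
    · simp [hb]
  · simp [ha]

theorem ts_tile (p q : ℕ) [Fact p.Prime] [Fact q.Prime]
    (A T : Finset ((ZMod p × ZMod p) × ZMod q))
    (hc : A.card * T.card = Fintype.card ((ZMod p × ZMod p) × ZMod q))
    (hT : ∀ g, ∃ s ∈ A, ∃ t ∈ T, s + t = g)
    (l : (ZMod p × ZMod p) × ZMod q) (hl : l ≠ 0) : tsF p q A l = 0 ∨ tsF p q T l = 0 := by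
  rw [← mul_eq_zero, ← ts_sum_univ p q l hl]
  unfold tsF
  rw [Finset.sum_mul_sum, ← Finset.sum_product']
  have hsurj : Set.SurjOn (fun z : ((ZMod p × ZMod p) × ZMod q) × ((ZMod p × ZMod p) × ZMod q) =>
      z.1 + z.2) (↑(A ×ˢ T)) (↑(Finset.univ : Finset ((ZMod p × ZMod p) × ZMod q))) := by
    intro g _
    obtain ⟨s, hs, t, ht, h⟩ := hT g
    exact ⟨(s, t), by simp [hs, ht], h⟩
  refine Finset.sum_nbij (fun z => z.1 + z.2) (fun _ _ => Finset.mem_univ _) ?_ hsurj ?_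
  · refine Finset.injOn_of_surjOn_of_card_le _ (fun _ _ => by simp) hsurj ?_
    rw [Finset.card_product, hc, Finset.card_univ]
  · intro z _
    exact (ts_chi_add p q l z.1 z.2).symm

theorem ts_F_scale (p q : ℕ) [Fact p.Prime] [Fact q.Prime] (hpq : p ≠ q)
    (S : Finset ((ZMod p × ZMod p) × ZMod q)) (a b : ZMod p) (c : ZMod q)
    (h : tsF p q S ((a, b), c) = 0) (k : ZMod p) (l : ZMod q) (hk : k ≠ 0) (hl : l ≠ 0) :
    tsF p q S ((k * a, k * b), l * c) = 0 := by
  unfold tsF at h ⊢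
  simp only [ts_chi] at h ⊢
  rw [← ts_gal p q hpq S (fun x => x.1.1 * a + x.1.2 * b) (fun x => x.2 * c) h k l hk hl]
  refine Finset.sum_congr rfl fun x _ => ?_
  congr 2 <;> ring

theorem ts_dvd_q (p q : ℕ) [Fact p.Prime] [Fact q.Prime]
    (S : Finset ((ZMod p × ZMod p) × ZMod q))
    (h : ∀ c : ZMod q, c ≠ 0 → tsF p q S ((0, 0), c) = 0) : q ∣ S.card := by
  have h1 : ∑ c : ZMod q, tsF p q S ((0, 0), c) = S.card := by
    rw [Finset.sum_eq_single 0 (fun c _ hc => h c hc) (by simp)]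
    simp [tsF, ts_chi]
  have h2 : ∑ c : ZMod q, tsF p q S ((0, 0), c) = q * (S.filter fun x => x.2 = 0).card := by
    simp only [tsF, ts_chi]
    rw [Finset.sum_comm]
    simp only [mul_zero, add_zero, AddChar.map_zero_eq_one, one_mul]
    simp only [mul_comm, ts_orth]
    rw [← Finset.sum_filter, Finset.sum_const, nsmul_eq_mul, mul_comm]
  rw [h1] at h2
  exact Dvd.intro _ (by exact_mod_cast h2.symm)

theorem ts_dvd_p (p q : ℕ) [Fact p.Prime] [Fact q.Prime] (hpq : p ≠ q)
    (S : Finset ((ZMod p × ZMod p) × ZMod q)) (a b : ZMod p)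
    (h : tsF p q S ((a, b), 0) = 0) : p ∣ S.card := by
  have h1 : ∑ k : ZMod p, tsF p q S ((k * a, k * b), 0) = S.card := by
    rw [Finset.sum_eq_single 0 (fun k _ hk => ?_) (by simp)]
    · simp [tsF, ts_chi]
    · simpa using ts_F_scale p q hpq S a b 0 h k 1 hk one_ne_zero
  have h2 : ∑ k : ZMod p, tsF p q S ((k * a, k * b), 0) =
      p * (S.filter fun x => x.1.1 * a + x.1.2 * b = 0).card := by
    simp only [tsF, ts_chi]
    rw [Finset.sum_comm]
    have (x : (ZMod p × ZMod p) × ZMod q) (k : ZMod p) :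
      x.1.1 * (k * a) + x.1.2 * (k * b) = k * (x.1.1 * a + x.1.2 * b) := by ring
    simp only [this, mul_zero, AddChar.map_zero_eq_one, mul_one, ts_orth]
    rw [← Finset.sum_filter, Finset.sum_const, nsmul_eq_mul, mul_comm]
  rw [h1] at h2
  exact Dvd.intro _ (by exact_mod_cast h2.symm)

theorem ts_dvd_pp (p q : ℕ) [Fact p.Prime] [Fact q.Prime]
    (S : Finset ((ZMod p × ZMod p) × ZMod q))
    (h : ∀ a : ZMod p × ZMod p, a ≠ 0 → tsF p q S (a, 0) = 0) : p * p ∣ S.card := by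
  have h1 : ∑ a : ZMod p × ZMod p, tsF p q S (a, 0) = S.card := by
    rw [Finset.sum_eq_single 0 (fun c _ hc => h c hc) (by simp)]
    simp [tsF, ts_chi]
  have h2 : ∑ a : ZMod p × ZMod p, tsF p q S (a, 0) =
      p * p * (S.filter fun x => x.1.1 = 0 ∧ x.1.2 = 0).card := by
    simp only [tsF, ts_chi]
    rw [Finset.sum_comm]
    simp only [mul_zero, AddChar.map_zero_eq_one, mul_one, AddChar.map_add_eq_mul,
      Fintype.sum_prod_type, ← Finset.sum_mul_sum]
    simp only [mul_comm _ (_ : ZMod p)]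
    simp only [ts_orth]
    have h2 : ∀ x : (ZMod p × ZMod p) × ZMod q,
        ((if x.1.1 = 0 then (p : ℂ) else 0) * if x.1.2 = 0 then (p : ℂ) else 0) =
        if x.1.1 = 0 ∧ x.1.2 = 0 then (p : ℂ) * p else 0 := by
      intro x; split_ifs <;> simp_all
    simp only [h2]
    rw [← Finset.sum_filter, Finset.sum_const, nsmul_eq_mul, mul_comm]
  rw [h1] at h2
  exact Dvd.intro _ (by exact_mod_cast h2.symm)

theorem ts_line_inj (p : ℕ) [Fact p.Prime] (a : ZMod p × ZMod p) (ha : a ≠ 0) (k k' : ZMod p)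
    (h1 : k * a.1 = k' * a.1) (h2 : k * a.2 = k' * a.2) : k = k' := by
  by_contra hne
  apply ha
  have h3 : k - k' ≠ 0 := sub_ne_zero.2 hne
  ext
  · exact (mul_eq_zero.1 (show (k - k') * a.1 = 0 by rw [sub_mul, h1, sub_self])).resolve_left h3
  · exact (mul_eq_zero.1 (show (k - k') * a.2 = 0 by rw [sub_mul, h2, sub_self])).resolve_left h3

theorem tile_implies_spectral (p q : ℕ) [Fact p.Prime] [Fact q.Prime] (hpq : p ≠ q)
    (A : Finset ((ZMod p × ZMod p) × ZMod q)) (hA : Tiles p q A) :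
    IsSpectral p q A := by
  classical
  obtain ⟨T, hc, hT⟩ := hA
  have hp : p.Prime := Fact.out
  have hq : q.Prime := Fact.out
  have hcop : Nat.Coprime p q := (Nat.coprime_primes hp hq).2 hpq
  have htile := ts_tile p q A T hc hT
  have hG : A.card * T.card = p ^ 2 * q := by
    rw [hc]; simp [ZMod.card, sq]
  have hp0 := hp.pos
  have hq0 := hq.pos
  have hnpq : ¬ p ∣ q := fun h => hpq ((Nat.prime_dvd_prime_iff_eq hp hq).1 h)
  have hnqp : ¬ q ∣ p := fun h => hpq ((Nat.prime_dvd_prime_iff_eq hq hp).1 h).symm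
  -- when `q` does not divide `#T`
  have hZq : ¬ q ∣ T.card → ∀ c : ZMod q, c ≠ 0 → tsF p q A ((0, 0), c) = 0 := by
    intro hn c hc0
    refine (htile ((0, 0), c) (by simpa [Prod.ext_iff] using hc0)).resolve_right fun h => hn ?_
    apply ts_dvd_q p q T
    intro d hd
    simpa [hc0] using ts_F_scale p q hpq T 0 0 c h 1 (d * c⁻¹) one_ne_zero
      (mul_ne_zero hd (inv_ne_zero hc0))
  -- when `p ^ 2` does not divide `#T`
  have hZp : ¬ p * p ∣ T.card →
      ∃ a : ZMod p × ZMod p, a ≠ 0 ∧ tsF p q T (a, 0) ≠ 0 := by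
    intro hn
    by_contra! hcon
    exact hn (ts_dvd_pp p q T hcon)
  have hne (a : ZMod p × ZMod p) (ha : a ≠ 0) (c : ZMod q) :
      ((a, c) : (ZMod p × ZMod p) × ZMod q) ≠ 0 := fun h => ha (congrArg Prod.fst h)
  have hdvd : A.card ∣ p ^ 2 * q := Dvd.intro _ hG
  obtain ⟨d, e, hd, he, hde⟩ := (Nat.dvd_mul).1 hdvd
  obtain ⟨i, hi, rfl⟩ := (Nat.dvd_prime_pow hp).1 hd
  rcases (Nat.dvd_prime hq).1 he with rfl | he'
  · rw [mul_one] at hde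
    interval_cases i
    · refine ts_spectral p q A {0} (by simpa using hde) (by simp) (by simp)
    · rw [pow_one] at hde
      have hTc : T.card = p * q := by
        rw [← hde] at hG
        exact Nat.eq_of_mul_eq_mul_left hp0 (by rw [hG]; ring)
      obtain ⟨a, ha, haT⟩ := hZp (by
        rw [hTc]; exact fun h => hnpq (Nat.dvd_of_mul_dvd_mul_left hp0 h))
      have haA := (htile (a, 0) (hne a ha 0)).resolve_right haT
      refine ts_spectral p q A
        (Finset.univ.image fun k : ZMod p => (((k * a.1, k * a.2), 0) : (ZMod p × ZMod p) × ZMod q))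
        ?_ ?_ ?_
      · rw [Finset.card_image_of_injective, Finset.card_univ, ZMod.card]
        · exact hde
        intro k k' h
        simp only [Prod.mk.injEq] at h
        exact ts_line_inj p a ha k k' h.1.1 h.1.2
      · simp only [Finset.mem_image, Finset.mem_univ, true_and]
        rintro _ ⟨k, rfl⟩ _ ⟨k', rfl⟩
        exact ⟨k - k', by simp [sub_mul]⟩
      · simp only [Finset.mem_image, Finset.mem_univ, true_and]
        rintro _ ⟨k, rfl⟩ h0
        have hk : k ≠ 0 := by rintro rfl; apply h0; simp
        simpa using ts_F_scale p q hpq A a.1 a.2 0 haA k 1 hk one_ne_zero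
    · have hTc : T.card = q := by
        rw [← hde] at hG
        exact Nat.eq_of_mul_eq_mul_left (pow_pos hp0 2) hG
      refine ts_spectral p q A
        (Finset.univ.image fun a : ZMod p × ZMod p => ((a, 0) : (ZMod p × ZMod p) × ZMod q))
        ?_ ?_ ?_
      · rw [Finset.card_image_of_injective, Finset.card_univ, ← hde]
        · simp [ZMod.card, sq]
        · intro k k' h
          exact congrArg Prod.fst h
      · simp only [Finset.mem_image, Finset.mem_univ, true_and]
        rintro _ ⟨k, rfl⟩ _ ⟨k', rfl⟩
        exact ⟨k - k', by simp⟩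
      · simp only [Finset.mem_image, Finset.mem_univ, true_and]
        rintro _ ⟨k, rfl⟩ h0
        refine (htile _ h0).resolve_right fun h => hnpq ?_
        rw [← hTc]
        exact ts_dvd_p p q hpq T k.1 k.2 h
  · rw [he'] at hde
    interval_cases i
    · rw [pow_zero, one_mul] at hde
      have hTc : T.card = p ^ 2 := by
        rw [← hde] at hG
        exact Nat.eq_of_mul_eq_mul_left hq0 (by rw [hG]; ring)
      have hz := hZq (by rw [hTc]; exact fun h => hnqp (hq.dvd_of_dvd_pow h))
      refine ts_spectral p q A
        (Finset.univ.image fun c : ZMod q => (((0, 0), c) : (ZMod p × ZMod p) × ZMod q))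
        ?_ ?_ ?_
      · rw [Finset.card_image_of_injective, Finset.card_univ, ZMod.card]
        · exact hde
        intro k k' h
        exact congrArg Prod.snd h
      · simp only [Finset.mem_image, Finset.mem_univ, true_and]
        rintro _ ⟨k, rfl⟩ _ ⟨k', rfl⟩
        exact ⟨k - k', by simp⟩
      · simp only [Finset.mem_image, Finset.mem_univ, true_and]
        rintro _ ⟨k, rfl⟩ h0
        exact hz k (by rintro rfl; exact h0 rfl)
    · rw [pow_one] at hde
      have hTc : T.card = p := by
        rw [← hde] at hG
        exact Nat.eq_of_mul_eq_mul_left (mul_pos hp0 hq0) (by rw [hG]; ring)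
      have hz := hZq (by rw [hTc]; exact hnqp)
      obtain ⟨a, ha, haT⟩ := hZp (by
        rw [hTc]; intro h
        have := Nat.le_of_dvd hp0 h
        nlinarith [hp.two_le])
      have haA := (htile (a, 0) (hne a ha 0)).resolve_right haT
      have haA1 : tsF p q A (a, 1) = 0 := by
        refine (htile (a, 1) (hne a ha 1)).resolve_right fun h => haT ?_
        unfold tsF at h ⊢
        simp only [ts_chi] at h ⊢
        have := ts_special p q hpq T hTc _ _ h
        simpa using this
      refine ts_spectral p q A
        (Finset.univ.image fun z : ZMod p × ZMod q =>
          (((z.1 * a.1, z.1 * a.2), z.2) : (ZMod p × ZMod p) × ZMod q)) ?_ ?_ ?_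
      · rw [Finset.card_image_of_injective, Finset.card_univ, ← hde]
        · simp [ZMod.card]
        · intro k k' h
          simp only [Prod.mk.injEq] at h
          exact Prod.ext (ts_line_inj p a ha _ _ h.1.1 h.1.2) h.2
      · simp only [Finset.mem_image, Finset.mem_univ, true_and]
        rintro _ ⟨k, rfl⟩ _ ⟨k', rfl⟩
        exact ⟨k - k', by simp [sub_mul]⟩
      · simp only [Finset.mem_image, Finset.mem_univ, true_and]
        rintro _ ⟨⟨k, c⟩, rfl⟩ h0
        by_cases hk : k = 0
        · subst hk
          have hc0 : c ≠ 0 := by rintro rfl; apply h0; simp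
          simpa using hz c hc0
        · by_cases hc0 : c = 0
          · subst hc0
            simpa using ts_F_scale p q hpq A a.1 a.2 0 haA k 1 hk one_ne_zero
          · simpa using ts_F_scale p q hpq A a.1 a.2 1 haA1 k c hk hc0
    · refine ts_spectral p q A Finset.univ ?_ (by simp) ?_
      · rw [← hde]; simp [ZMod.card, sq]
      · intro l _ hl
        have hAu : A = Finset.univ := by
          rw [← Finset.card_eq_iff_eq_univ, ← hde]; simp [ZMod.card, sq]
        rw [hAu]
        exact ts_sum_univ p q l hl
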